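/- Let Ω ⊂ ℂ (identified with ℝ²) be a bounded open set, let r ≥ 2 and let p ∈ (2r/(r+2), 2). Then for every smooth function f : ℝ² → ℝ with compact support contained in Ω one has (∬_Ω |f|^r dx dy)^{1/r} ≤ ((p−1)/(2−p))^{(p−1)/p} · (√π · 2^{1/p})^{−1} · |Ω|^{1/r} · (Γ(2/p)·Γ(3−2/p))^{−1/2} · (∬_Ω |∇f|² dx dy)^{1/2}. -/

import Mathlib

open MeasureTheory Real

/-- Squared Euclidean norm of the gradient of `f : ℂ → ℝ` at `z`, under the
identification `ℂ ≅ ℝ²`. -/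
noncomputable def gradNormSq (f : ℂ → ℝ) (z : ℂ) : ℝ :=
  (fderiv ℝ f z 1) ^ 2 + (fderiv ℝ f z Complex.I) ^ 2

/-!
Hölder's inequality on `Ω` reduces the claim to the sharp planar Sobolev inequality
`‖u‖_q ≤ C ‖∇u‖_p`, `q = 2p/(2-p)`: it bounds `‖f‖_r` by `|Ω|^(1/r - 1/q) ‖f‖_q` and `‖∇f‖_p` by
`|Ω|^(1/p - 1/2) ‖∇f‖_2`, and the two exponents of `|Ω|` add up to `1/r`.

The Sobolev inequality is proved by mass transport, after Cordero-Erausquin, Nazaret and Villani.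
Let `T` be a map with triangular Jacobian matrix and nonnegative diagonal (a Knothe map) that
carries the density `u ^ q` to a multiple of `G`, say to `G` itself: `G (T z) det DT(z) = u z ^ q`.
Since `√(det DT) ≤ (div T) / 2` by the arithmetic–geometric mean inequality,
`∫ √G = ∫ u ^ (q/2) √(det DT) ≤ ½ ∫ u ^ (q/2) div T`. Integrating by parts moves the divergence onto
`u ^ (q/2)`, and Hölder's inequality leaves `‖∇u‖_p` times the moment of order `P = p/(p-1)` of `G`.
The extremal choice `G z = (1 + |z| ^ P) ^ (-2)`, whose integrals are Beta functions, produces the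
constant. To transport a positive density, `u` is replaced by `√(u² + ε²)` on a large square, and
`ε → 0`.
-/

section

open Set Filter Topology

/-! ### Monotone transport and Knothe maps -/

theorem surjective_of_le_deriv {f : ℝ → ℝ} (hf : Differentiable ℝ f) {C : ℝ} (hC : 0 < C)
    (hfC : ∀ x, C ≤ deriv f x) : Function.Surjective f := by
  have hgrowth := mul_sub_le_image_sub_of_le_deriv hf hfC
  refine hf.continuous.surjective ?_ ?_
  · refine tendsto_atTop_mono' atTop (f₁ := fun x => C * x + f 0) ?_
      ((tendsto_id.const_mul_atTop hC).atTop_add tendsto_const_nhds)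
    filter_upwards [eventually_ge_atTop 0] with x hx
    linarith [hgrowth hx]
  · refine tendsto_atBot_mono' atBot (f₁ := fun x => C * x + f 0) ?_
      ((tendsto_id.const_mul_atBot hC).atBot_add tendsto_const_nhds)
    filter_upwards [eventually_le_atBot 0] with x hx
    linarith [hgrowth hx]

theorem exists_orderIso_integral {ψ : ℝ → ℝ} (hψ : Continuous ψ) {C : ℝ} (hC : 0 < C)
    (hψC : ∀ t, C ≤ ψ t) (c : ℝ) : ∃ e : ℝ ≃o ℝ, ∀ d, e d = ∫ t in c..d, ψ t := by
  have hderiv (d : ℝ) : HasDerivAt (fun d => ∫ t in c..d, ψ t) (ψ d) d :=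
    hψ.integral_hasStrictDerivAt c d |>.hasDerivAt
  refine ⟨StrictMono.orderIsoOfSurjective (fun d => ∫ t in c..d, ψ t)
    (strictMono_of_hasDerivAt_pos hderiv fun d => hC.trans_le (hψC d))
    (surjective_of_le_deriv (fun d => (hderiv d).differentiableAt) hC fun d => ?_), fun d => rfl⟩
  rw [(hderiv d).deriv]
  exact hψC d

theorem continuous_orderIso_symm_apply {X α β : Type*} [TopologicalSpace X]
    [LinearOrder α] [TopologicalSpace α] [OrderTopology α] [LinearOrder β] [TopologicalSpace β]
    [OrderClosedTopology β] {e : X → α ≃o β} (he : ∀ a, Continuous fun x => e x a) {g : X → β}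
    (hg : Continuous g) : Continuous fun x => (e x).symm (g x) := by
  rw [continuous_iff_lower_upperSemicontinuous, lowerSemicontinuous_iff_isOpen_preimage,
    upperSemicontinuous_iff_isOpen_preimage]
  refine ⟨fun a => ?_, fun a => ?_⟩
  · simpa only [preimage, mem_Ioi, OrderIso.lt_symm_apply] using isOpen_lt (he a) hg
  · simpa only [preimage, mem_Iio, OrderIso.symm_apply_lt] using isOpen_lt hg (he a)

theorem exists_monotone_transport {X : Type*} [TopologicalSpace X] {φ ψ : X → ℝ → ℝ} {δ : X → ℝ}
    (hφ : Continuous (Function.uncurry φ)) (hψ : Continuous (Function.uncurry ψ))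
    (hδ : ∀ x, 0 < δ x) (hδψ : ∀ x t, δ x ≤ ψ x t) {a b c d : ℝ}
    (hmass : ∀ x, ∫ t in a..b, φ x t = ∫ t in c..d, ψ x t) :
    ∃ T : X → ℝ → ℝ, Continuous (Function.uncurry T) ∧
      (∀ x y, HasDerivAt (T x) (φ x y / ψ x (T x y)) y) ∧ (∀ x, T x a = c) ∧ ∀ x, T x b = d := by
  have hφx (x : X) : Continuous (φ x) := hφ.comp (Continuous.prodMk_right x)
  have hψx (x : X) : Continuous (ψ x) := hψ.comp (Continuous.prodMk_right x)
  choose e he using fun x => exists_orderIso_integral (hψx x) (hδ x) (hδψ x) c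
  have hΦ : Continuous fun z : X × ℝ => ∫ t in a..z.2, φ z.1 t :=
    intervalIntegral.continuous_parametric_intervalIntegral_of_continuous
      (f := fun z : X × ℝ => φ z.1) (by fun_prop) continuous_snd
  have hΨ (d : ℝ) : Continuous fun z : X × ℝ => e z.1 d := by
    simp only [he]
    exact intervalIntegral.continuous_parametric_intervalIntegral_of_continuous
      (f := fun z : X × ℝ => ψ z.1) (by fun_prop) continuous_const
  refine ⟨fun x y => (e x).symm (∫ t in a..y, φ x t), continuous_orderIso_symm_apply hΨ hΦ,
    fun x y => ?_, fun x => ?_, fun x => ?_⟩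
  · have hprimitive : HasDerivAt (fun y => ∫ t in a..y, φ x t) (φ x y) y :=
      (hφx x).integral_hasStrictDerivAt a y |>.hasDerivAt
    have he' (s : ℝ) : HasDerivAt (e x) (ψ x s) s := by
      rw [funext (he x)]
      exact (hψx x).integral_hasStrictDerivAt c s |>.hasDerivAt
    have hinverse := HasDerivAt.of_local_left_inverse (e x).symm.continuous.continuousAt
      (he' ((e x).symm (∫ t in a..y, φ x t))) ((hδ x).trans_le (hδψ x _)).ne'
      (.of_forall (e x).apply_symm_apply)
    rw [div_eq_inv_mul]
    exact hinverse.comp y hprimitive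
  · rw [OrderIso.symm_apply_eq, he, intervalIntegral.integral_same, intervalIntegral.integral_same]
  · rw [OrderIso.symm_apply_eq, he, hmass]

/-- The square `[-a, a] × [-a, a]` in the complex plane. -/
def centeredSquare (a : ℝ) : Set ℂ := Icc (-a) a ×ℂ Icc (-a) a

theorem isCompact_centeredSquare (a : ℝ) : IsCompact (centeredSquare a) :=
  isCompact_Icc.reProdIm isCompact_Icc

theorem measurableSet_centeredSquare (a : ℝ) : MeasurableSet (centeredSquare a) :=
  (isCompact_centeredSquare a).measurableSet

theorem integrableOn_centeredSquare {k : ℂ → ℝ} (hk : Continuous k) (a : ℝ) :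
    IntegrableOn k (centeredSquare a) :=
  hk.continuousOn.integrableOn_compact (isCompact_centeredSquare a)

theorem aecover_centeredSquare : AECover volume atTop centeredSquare where
  ae_eventually_mem := .of_forall fun z => by
    filter_upwards [eventually_ge_atTop |z.re|, eventually_ge_atTop |z.im|] with R hre him
    exact ⟨abs_le.1 hre, abs_le.1 him⟩
  measurableSet := measurableSet_centeredSquare

theorem setIntegral_centeredSquare {k : ℂ → ℝ} (hk : Continuous k) {a : ℝ} (ha : 0 ≤ a) :
    ∫ z in centeredSquare a, k z = ∫ x in -a..a, ∫ y in -a..a, k (x + y * Complex.I) := by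
  have hprod := Complex.volume_preserving_equiv_real_prod.symm.setIntegral_preimage_emb
    Complex.measurableEquivRealProd.symm.measurableEmbedding k (centeredSquare a)
  rw [← hprod]
  simp_rw [intervalIntegral.integral_of_le (neg_le_self ha), ← integral_Icc_eq_integral_Ioc,
    ← Complex.mk_eq_add_mul_I]
  exact setIntegral_prod _ ((hk.comp Complex.equivRealProdCLM.symm.continuous).continuousOn
    |>.integrableOn_compact (isCompact_Icc.prod isCompact_Icc))

theorem setIntegral_centeredSquare_symm {k : ℂ → ℝ} (hk : Continuous k) {a : ℝ} (ha : 0 ≤ a) :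
    ∫ z in centeredSquare a, k z = ∫ y in -a..a, ∫ x in -a..a, k (x + y * Complex.I) := by
  rw [setIntegral_centeredSquare hk ha]
  refine intervalIntegral_intervalIntegral_swap ?_
  have : Continuous (Function.uncurry fun x y : ℝ => k (x + y * Complex.I)) := by fun_prop
  exact (this.continuousOn.integrableOn_compact (isCompact_uIcc.prod isCompact_uIcc)).mono_set
    (prod_mono uIoc_subset_uIcc uIoc_subset_uIcc)

/-- A Knothe map: a triangular map `x + iy ↦ fst x + i snd x y`, nondecreasing in each variable,
which carries `[-a, a]²` to `[-R, R]²` side by side. The primes denote the derivatives of `fst` and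
of `snd x`; `snd` need not be differentiable in `x`. -/
structure KnotheMap (a R : ℝ) where
  fst : ℝ → ℝ
  fst' : ℝ → ℝ
  snd : ℝ → ℝ → ℝ
  snd' : ℝ → ℝ → ℝ
  hasDerivAt_fst : ∀ x, HasDerivAt fst (fst' x) x
  hasDerivAt_snd : ∀ x y, HasDerivAt (snd x) (snd' x y) y
  continuous_fst' : Continuous fst'
  continuous_snd : Continuous (Function.uncurry snd)
  continuous_snd' : Continuous (Function.uncurry snd')
  fst'_nonneg : ∀ x, 0 ≤ fst' x
  snd'_nonneg : ∀ x y, 0 ≤ snd' x y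
  fst_left : fst (-a) = -R
  fst_right : fst a = R
  snd_left : ∀ x, snd x (-a) = -R
  snd_right : ∀ x, snd x a = R

namespace KnotheMap

variable {a R : ℝ}

instance : CoeFun (KnotheMap a R) fun _ => ℂ → ℂ where
  coe K z := K.fst z.re + K.snd z.re z.im * Complex.I

/-- The Jacobian determinant of a Knothe map. -/
def jacobian (K : KnotheMap a R) (z : ℂ) : ℝ := K.fst' z.re * K.snd' z.re z.im

/-- The divergence of a Knothe map, seen as a vector field on the plane. -/
def divergence (K : KnotheMap a R) (z : ℂ) : ℝ := K.fst' z.re + K.snd' z.re z.im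

theorem continuous_fst (K : KnotheMap a R) : Continuous K.fst :=
  continuous_iff_continuousAt.2 fun x => (K.hasDerivAt_fst x).continuousAt

@[fun_prop]
theorem continuous_snd_re_im (K : KnotheMap a R) : Continuous fun z : ℂ => K.snd z.re z.im :=
  K.continuous_snd.comp (Complex.continuous_re.prodMk Complex.continuous_im)

theorem continuous_snd'_re_im (K : KnotheMap a R) : Continuous fun z : ℂ => K.snd' z.re z.im :=
  K.continuous_snd'.comp (Complex.continuous_re.prodMk Complex.continuous_im)

theorem continuous (K : KnotheMap a R) : Continuous K := by
  have := K.continuous_fst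
  have := K.continuous_snd_re_im
  fun_prop

theorem continuous_jacobian (K : KnotheMap a R) : Continuous K.jacobian :=
  (K.continuous_fst'.comp Complex.continuous_re).mul K.continuous_snd'_re_im

theorem continuous_divergence (K : KnotheMap a R) : Continuous K.divergence :=
  (K.continuous_fst'.comp Complex.continuous_re).add K.continuous_snd'_re_im

theorem jacobian_nonneg (K : KnotheMap a R) (z : ℂ) : 0 ≤ K.jacobian z :=
  mul_nonneg (K.fst'_nonneg _) (K.snd'_nonneg _ _)

theorem sqrt_jacobian_le (K : KnotheMap a R) (z : ℂ) : √(K.jacobian z) ≤ K.divergence z / 2 := by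
  have hfst := K.fst'_nonneg z.re
  have hsnd := K.snd'_nonneg z.re z.im
  refine Real.sqrt_le_iff.2 ⟨by unfold divergence; positivity, ?_⟩
  simp only [jacobian, divergence]
  nlinarith [sq_nonneg (K.fst' z.re - K.snd' z.re z.im)]

theorem mapsTo_centeredSquare (K : KnotheMap a R) :
    MapsTo K (centeredSquare a) (centeredSquare R) := by
  have hfst : Monotone K.fst := monotone_of_hasDerivAt_nonneg K.hasDerivAt_fst K.fst'_nonneg
  have hsnd (x : ℝ) : Monotone (K.snd x) :=
    monotone_of_hasDerivAt_nonneg (K.hasDerivAt_snd x) (K.snd'_nonneg x)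
  rintro z ⟨hre, him⟩
  have hfst_mem := hfst.mapsTo_Icc hre
  have hsnd_mem := (hsnd z.re).mapsTo_Icc him
  rw [K.fst_left, K.fst_right] at hfst_mem
  rw [K.snd_left, K.snd_right] at hsnd_mem
  exact ⟨by simpa using hfst_mem, by simpa using hsnd_mem⟩

theorem setIntegral_comp_mul_jacobian (K : KnotheMap a R) (ha : 0 ≤ a) (hR : 0 ≤ R) {H : ℂ → ℝ}
    (hH : Continuous H) :
    ∫ z in centeredSquare a, H (K z) * K.jacobian z = ∫ z in centeredSquare R, H z := by
  have hinner (x : ℝ) :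
      ∫ y in -a..a, H (K.fst x + K.snd x y * Complex.I) * (K.fst' x * K.snd' x y) =
        (∫ y in -R..R, H (K.fst x + y * Complex.I)) * K.fst' x := by
    have hsubst := intervalIntegral.integral_comp_mul_deriv (a := -a) (b := a)
      (g := fun y => H (K.fst x + y * Complex.I)) (fun y _ => K.hasDerivAt_snd x y)
      (K.continuous_snd'.comp (Continuous.prodMk_right x)).continuousOn (by fun_prop)
    rw [K.snd_left, K.snd_right] at hsubst
    rw [← hsubst, ← intervalIntegral.integral_mul_const]
    exact intervalIntegral.integral_congr fun y _ => by simp only [Function.comp_apply]; ring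
  have hsubst := intervalIntegral.integral_comp_mul_deriv (a := -a) (b := a)
    (g := fun x => ∫ y in -R..R, H (x + y * Complex.I))
    (fun x _ => K.hasDerivAt_fst x) K.continuous_fst'.continuousOn (by fun_prop)
  rw [K.fst_left, K.fst_right] at hsubst
  rw [setIntegral_centeredSquare (k := fun z => H (K z) * K.jacobian z)
    ((hH.comp K.continuous).mul K.continuous_jacobian) ha, setIntegral_centeredSquare hH hR,
    ← hsubst]
  simp only [jacobian, Complex.add_re, Complex.ofReal_re, Complex.re_ofReal_mul, Complex.I_re,
    mul_zero, add_zero, Complex.add_im, Complex.ofReal_im, Complex.im_ofReal_mul, Complex.I_im,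
    mul_one, zero_add, hinner, Function.comp_apply]

end KnotheMap

/-- The marginal `x ↦ ∫_{-a}^{a} F (x + iy) dy` of a density `F` on the strip `|Im z| ≤ a`. -/
noncomputable def marginal (F : ℂ → ℝ) (a x : ℝ) : ℝ := ∫ y in -a..a, F (x + y * Complex.I)

theorem continuous_marginal {F : ℂ → ℝ} (hF : Continuous F) (a : ℝ) :
    Continuous (marginal F a) := by
  unfold marginal
  fun_prop

theorem marginal_pos {F : ℂ → ℝ} (hF : Continuous F) (hFpos : ∀ z, 0 < F z) {a : ℝ} (ha : 0 < a)
    (x : ℝ) : 0 < marginal F a x :=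
  intervalIntegral.intervalIntegral_pos_of_pos (Continuous.intervalIntegrable (by fun_prop) _ _)
    (fun _ => hFpos _) (by linarith)

theorem mul_le_marginal {F : ℂ → ℝ} (hF : Continuous F) {δ : ℝ} (hδF : ∀ z, δ ≤ F z) {a : ℝ}
    (ha : 0 ≤ a) (x : ℝ) : 2 * a * δ ≤ marginal F a x := by
  calc 2 * a * δ = ∫ _ in -a..a, δ := by rw [intervalIntegral.integral_const, smul_eq_mul]; ring
    _ ≤ marginal F a x := intervalIntegral.integral_mono_on (by linarith) (by simp)
        (Continuous.intervalIntegrable (by fun_prop) _ _) fun _ _ => hδF _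

theorem exists_knotheMap_of_marginal {F G : ℂ → ℝ} (hF : Continuous F) (hFpos : ∀ z, 0 < F z)
    (hG : Continuous G) {δ : ℝ} (hδ : 0 < δ) (hδG : ∀ z, δ ≤ G z) {a R : ℝ} {T T' : ℝ → ℝ}
    (hT : ∀ x, HasDerivAt T (T' x) x) (hT' : Continuous T') (hT'pos : ∀ x, 0 < T' x)
    (hTleft : T (-a) = -R) (hTright : T a = R)
    (hmarginal : ∀ x, T' x * marginal G R (T x) = marginal F a x) :
    ∃ K : KnotheMap a R, ∀ z, G (K z) * K.jacobian z = F z := by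
  have hTcont : Continuous T := continuous_iff_continuousAt.2 fun x => (hT x).continuousAt
  have hpos (x y : ℝ) : 0 < T' x * G (T x + y * Complex.I) :=
    mul_pos (hT'pos x) (hδ.trans_le (hδG _))
  obtain ⟨S, hS, hSderiv, hSleft, hSright⟩ := exists_monotone_transport
    (φ := fun x y : ℝ => F (x + y * Complex.I)) (ψ := fun x y => T' x * G (T x + y * Complex.I))
    (δ := fun x => T' x * δ) (a := -a) (b := a) (c := -R) (d := R) (by fun_prop)
    (by unfold Function.uncurry; fun_prop) (fun x => mul_pos (hT'pos x) hδ)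
    (fun x y => mul_le_mul_of_nonneg_left (hδG _) (hT'pos x).le) fun x => by
      rw [intervalIntegral.integral_const_mul]
      exact (hmarginal x).symm
  have hScont : Continuous fun w : ℝ × ℝ => S w.1 w.2 := hS
  refine ⟨{
    fst := T
    fst' := T'
    snd := S
    snd' := fun x y => F (x + y * Complex.I) / (T' x * G (T x + S x y * Complex.I))
    hasDerivAt_fst := hT
    hasDerivAt_snd := hSderiv
    continuous_fst' := hT'
    continuous_snd := hS
    continuous_snd' := by
      unfold Function.uncurry
      exact Continuous.div (by fun_prop) (by fun_prop) fun w => (hpos _ _).ne'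
    fst'_nonneg := fun x => (hT'pos x).le
    snd'_nonneg := fun x y => (div_pos (hFpos _) (hpos _ _)).le
    fst_left := hTleft
    fst_right := hTright
    snd_left := hSleft
    snd_right := hSright }, fun z => ?_⟩
  have hne := (hpos z.re (S z.re z.im)).ne'
  simp only [KnotheMap.jacobian, Complex.re_add_im]
  rw [← mul_assoc, mul_comm (G _), mul_div_cancel₀ _ hne]

theorem exists_knotheMap_of_le {F G : ℂ → ℝ} (hF : Continuous F) (hFpos : ∀ z, 0 < F z)
    (hG : Continuous G) {δ : ℝ} (hδ : 0 < δ) (hδG : ∀ z, δ ≤ G z) {a R : ℝ} (ha : 0 < a)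
    (hR : 0 < R) (hmass : ∫ z in centeredSquare a, F z = ∫ z in centeredSquare R, G z) :
    ∃ K : KnotheMap a R, ∀ z, G (K z) * K.jacobian z = F z := by
  rw [setIntegral_centeredSquare hF ha.le, setIntegral_centeredSquare hG hR.le] at hmass
  have hF₁ := continuous_marginal hF a
  have hG₁ := continuous_marginal hG R
  have hF₁pos := marginal_pos hF hFpos ha
  have hG₁pos := marginal_pos hG (fun z => hδ.trans_le (hδG z)) hR
  obtain ⟨T, hTcont, hT, hTleft, hTright⟩ := exists_monotone_transport (X := Unit)
    (φ := fun _ => marginal F a) (ψ := fun _ => marginal G R) (by fun_prop) (by fun_prop)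
    (fun _ => (by positivity : 0 < 2 * R * δ)) (fun _ => mul_le_marginal hG hδG hR.le)
    fun _ => hmass
  exact exists_knotheMap_of_marginal hF hFpos hG hδ hδG (hT ())
    (hF₁.div (hG₁.comp (hTcont.comp (Continuous.prodMk_right ()))) fun x => (hG₁pos _).ne')
    (fun x => div_pos (hF₁pos _) (hG₁pos _)) (hTleft ()) (hTright ())
    fun x => div_mul_cancel₀ _ (hG₁pos _).ne'

theorem exists_knotheMap {F G : ℂ → ℝ} (hF : Continuous F) (hFpos : ∀ z, 0 < F z)
    (hG : Continuous G) (hGpos : ∀ z, 0 < G z) {a R : ℝ} (ha : 0 < a) (hR : 0 < R)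
    (hmass : ∫ z in centeredSquare a, F z = ∫ z in centeredSquare R, G z) :
    ∃ K : KnotheMap a R, ∀ z ∈ centeredSquare a, G (K z) * K.jacobian z = F z := by
  -- Truncating `G` from below at its minimum over the target square does not change it there.
  have hne : (centeredSquare R).Nonempty :=
    ⟨0, by simp [centeredSquare, Complex.mem_reProdIm, hR.le]⟩
  obtain ⟨z₀, -, hmin⟩ := (isCompact_centeredSquare R).exists_isMinOn hne hG.continuousOn
  have hmax : ∀ z ∈ centeredSquare R, max (G z) (G z₀) = G z := fun z hz => max_eq_left (hmin hz)
  obtain ⟨K, hK⟩ := exists_knotheMap_of_le hF hFpos (hG.max continuous_const) (hGpos z₀)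
    (fun z => le_max_right (G z) (G z₀)) ha hR
    (hmass.trans (setIntegral_congr_fun (measurableSet_centeredSquare R) hmax).symm)
  exact ⟨K, fun z hz => by rw [← hmax _ (K.mapsTo_centeredSquare hz), hK]⟩

namespace KnotheMap

variable {a R : ℝ}

theorem setIntegral_fderiv_one_mul_fst_add (K : KnotheMap a R) (ha : 0 ≤ a) {h : ℂ → ℝ} {c : ℝ}
    (hh : ContDiff ℝ 1 h) (hc : ∀ z ∉ Ioo (-a) a ×ℂ Ioo (-a) a, h z = c) :
    ∫ z in centeredSquare a, (fderiv ℝ h z 1 * K.fst z.re + h z * K.fst' z.re) =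
      4 * a * R * c := by
  have hhcont := hh.continuous
  have hfst := K.continuous_fst
  have hfst' := K.continuous_fst'
  have hderiv (x y : ℝ) : HasDerivAt (fun x : ℝ => h (x + y * Complex.I))
      (fderiv ℝ h (x + y * Complex.I) 1) x :=
    (hh.differentiable one_ne_zero _).hasFDerivAt.comp_hasDerivAt x
      (Complex.ofRealCLM.hasDerivAt.add_const _)
  have hline (y : ℝ) : ∫ x in -a..a, (fderiv ℝ h (x + y * Complex.I) 1 * K.fst x +
      h (x + y * Complex.I) * K.fst' x) = 2 * R * c := by
    rw [intervalIntegral.integral_deriv_mul_eq_sub (fun x _ => hderiv x y)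
      (fun x _ => K.hasDerivAt_fst x) (Continuous.intervalIntegrable (by fun_prop) _ _)
      (Continuous.intervalIntegrable (by fun_prop) _ _), hc, hc, K.fst_left, K.fst_right]
    · ring
    all_goals simp [Complex.mem_reProdIm]
  rw [setIntegral_centeredSquare_symm (by fun_prop) ha]
  simp only [Complex.add_re, Complex.ofReal_re, Complex.re_ofReal_mul, Complex.I_re, mul_zero,
    add_zero, hline, intervalIntegral.integral_const, smul_eq_mul]
  ring

theorem setIntegral_fderiv_I_mul_snd_add (K : KnotheMap a R) (ha : 0 ≤ a) {h : ℂ → ℝ} {c : ℝ}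
    (hh : ContDiff ℝ 1 h) (hc : ∀ z ∉ Ioo (-a) a ×ℂ Ioo (-a) a, h z = c) :
    ∫ z in centeredSquare a,
      (fderiv ℝ h z Complex.I * K.snd z.re z.im + h z * K.snd' z.re z.im) = 4 * a * R * c := by
  have hhcont := hh.continuous
  have hsnd' := K.continuous_snd'_re_im
  have hderiv (x y : ℝ) : HasDerivAt (fun y : ℝ => h (x + y * Complex.I))
      (fderiv ℝ h (x + y * Complex.I) Complex.I) y := by
    have hline := (Complex.ofRealCLM.hasDerivAt (x := y)).mul_const Complex.I |>.const_add (x : ℂ)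
    rw [Complex.ofRealCLM_apply, Complex.ofReal_one, one_mul] at hline
    exact (hh.differentiable one_ne_zero _).hasFDerivAt.comp_hasDerivAt y hline
  have hline (x : ℝ) : ∫ y in -a..a, (fderiv ℝ h (x + y * Complex.I) Complex.I * K.snd x y +
      h (x + y * Complex.I) * K.snd' x y) = 2 * R * c := by
    rw [intervalIntegral.integral_deriv_mul_eq_sub (fun y _ => hderiv x y)
      (fun y _ => K.hasDerivAt_snd x y) (Continuous.intervalIntegrable (by fun_prop) _ _)
      ((K.continuous_snd'.comp (Continuous.prodMk_right x)).intervalIntegrable _ _), hc, hc,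
      K.snd_left, K.snd_right]
    · ring
    all_goals simp [Complex.mem_reProdIm]
  rw [setIntegral_centeredSquare (by fun_prop) ha]
  simp only [Complex.add_re, Complex.ofReal_re, Complex.re_ofReal_mul, Complex.I_re, mul_zero,
    add_zero, Complex.add_im, Complex.ofReal_im, Complex.im_ofReal_mul, Complex.I_im, mul_one,
    zero_add, hline, intervalIntegral.integral_const, smul_eq_mul]
  ring

theorem setIntegral_mul_divergence_add (K : KnotheMap a R) (ha : 0 ≤ a) {h : ℂ → ℝ} {c : ℝ}
    (hh : ContDiff ℝ 1 h) (hc : ∀ z ∉ Ioo (-a) a ×ℂ Ioo (-a) a, h z = c) :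
    ∫ z in centeredSquare a, (h z * K.divergence z + fderiv ℝ h z (K z)) = 8 * a * R * c := by
  have hhcont := hh.continuous
  have hfst := K.continuous_fst
  have hfst' := K.continuous_fst'
  have hsnd' := K.continuous_snd'_re_im
  have happly (z : ℂ) : fderiv ℝ h z (K z) =
      K.fst z.re * fderiv ℝ h z 1 + K.snd z.re z.im * fderiv ℝ h z Complex.I := by
    rw [← smul_eq_mul, ← smul_eq_mul, ← map_smul, ← map_smul, ← map_add, Complex.real_smul,
      Complex.real_smul, mul_one]
  calc ∫ z in centeredSquare a, (h z * K.divergence z + fderiv ℝ h z (K z))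
      = ∫ z in centeredSquare a, ((fderiv ℝ h z 1 * K.fst z.re + h z * K.fst' z.re) +
          (fderiv ℝ h z Complex.I * K.snd z.re z.im + h z * K.snd' z.re z.im)) := by
        congr with z
        rw [happly, divergence]
        ring
    _ = 8 * a * R * c := by
        rw [integral_add (integrableOn_centeredSquare (by fun_prop) a)
          (integrableOn_centeredSquare (by fun_prop) a),
          K.setIntegral_fderiv_one_mul_fst_add ha hh hc,
          K.setIntegral_fderiv_I_mul_snd_add ha hh hc]
        ring

theorem setIntegral_sqrt_le (K : KnotheMap a R) (ha : 0 ≤ a) (hR : 0 ≤ R) {h G : ℂ → ℝ} {c : ℝ}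
    (hh : ContDiff ℝ 1 h) (hhnonneg : ∀ z, 0 ≤ h z)
    (hc : ∀ z ∉ Ioo (-a) a ×ℂ Ioo (-a) a, h z = c) (hG : Continuous G)
    (hK : ∀ z ∈ centeredSquare a, G (K z) * K.jacobian z = h z ^ 2) :
    ∫ z in centeredSquare R, √(G z) ≤
      4 * a * R * c - (∫ z in centeredSquare a, fderiv ℝ h z (K z)) / 2 := by
  have hKcont := K.continuous
  have hjac := K.continuous_jacobian
  have hdiv := K.continuous_divergence
  have hflux := K.setIntegral_mul_divergence_add ha hh hc
  rw [integral_add (f := fun z => h z * K.divergence z)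
    (integrableOn_centeredSquare (hh.continuous.mul hdiv) a)
    (integrableOn_centeredSquare (by fun_prop) a)] at hflux
  calc ∫ z in centeredSquare R, √(G z)
      = ∫ z in centeredSquare a, √(G (K z)) * K.jacobian z :=
        (K.setIntegral_comp_mul_jacobian ha hR hG.sqrt).symm
    _ = ∫ z in centeredSquare a, h z * √(K.jacobian z) := by
        refine setIntegral_congr_fun (measurableSet_centeredSquare a) fun z hz => ?_
        dsimp only
        rw [← Real.sqrt_sq (hhnonneg z), ← hK z hz, Real.sqrt_mul' _ (K.jacobian_nonneg z),
          mul_assoc, Real.mul_self_sqrt (K.jacobian_nonneg z)]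
    _ ≤ ∫ z in centeredSquare a, h z * K.divergence z / 2 := by
        refine setIntegral_mono_on (integrableOn_centeredSquare (hh.continuous.mul hjac.sqrt) a)
          (integrableOn_centeredSquare ((hh.continuous.mul hdiv).div_const 2) a)
          (measurableSet_centeredSquare a) fun z _ => ?_
        rw [mul_div_assoc]
        exact mul_le_mul_of_nonneg_left (K.sqrt_jacobian_le z) (hhnonneg z)
    _ = 4 * a * R * c - (∫ z in centeredSquare a, fderiv ℝ h z (K z)) / 2 := by
        rw [integral_div]
        linarith

end KnotheMap

/-! ### The Sobolev inequality with a test density -/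

theorem memLp_centeredSquare {k : ℂ → ℝ} (hk : Continuous k) (a : ℝ) (p : ENNReal) :
    MemLp k p (volume.restrict (centeredSquare a)) := by
  have hcompact := isCompact_centeredSquare a
  obtain ⟨C, hC⟩ := hcompact.exists_bound_of_continuousOn hk.continuousOn
  have : IsFiniteMeasure (volume.restrict (centeredSquare a)) :=
    isFiniteMeasure_restrict.2 hcompact.measure_lt_top.ne
  exact .of_bound hk.aestronglyMeasurable C
    (ae_restrict_of_forall_mem (measurableSet_centeredSquare a) hC)

theorem neg_fderiv_rpow_apply_le {E : Type*} [NormedAddCommGroup E] [NormedSpace ℝ E] {w : E → ℝ}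
    {z : E} (hw : DifferentiableAt ℝ w z) (hwpos : 0 < w z) {s : ℝ} (hs : 0 ≤ s) (v : E) :
    -fderiv ℝ (fun z => w z ^ s) z v ≤ s * (‖fderiv ℝ w z‖ * (w z ^ (s - 1) * ‖v‖)) := by
  rw [(hw.hasFDerivAt.rpow_const (.inl hwpos.ne')).fderiv, smul_apply, smul_eq_mul]
  calc -(s * w z ^ (s - 1) * fderiv ℝ w z v) = s * w z ^ (s - 1) * -fderiv ℝ w z v := by ring
    _ ≤ s * w z ^ (s - 1) * (‖fderiv ℝ w z‖ * ‖v‖) := by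
        gcongr
        exact (neg_le_abs _).trans ((fderiv ℝ w z).le_opNorm v)
    _ = _ := by ring

namespace KnotheMap

variable {a R p P q : ℝ} {w G : ℂ → ℝ}

theorem setIntegral_rpow_mul_norm (K : KnotheMap a R) (ha : 0 ≤ a) (hR : 0 ≤ R)
    (hP : 0 < P) (hqP : (q / 2 - 1) * P = q) (hw : ∀ z, 0 ≤ w z) (hG : Continuous G)
    (hK : ∀ z ∈ centeredSquare a, G (K z) * K.jacobian z = w z ^ q) :
    ∫ z in centeredSquare a, (w z ^ (q / 2 - 1) * ‖K z‖) ^ P =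
      ∫ z in centeredSquare R, G z * ‖z‖ ^ P := by
  rw [← K.setIntegral_comp_mul_jacobian ha hR (H := fun z => G z * ‖z‖ ^ P)
    (hG.mul (continuous_norm.rpow_const fun _ => .inr hP.le))]
  refine setIntegral_congr_fun (measurableSet_centeredSquare a) fun z hz => ?_
  dsimp only
  rw [mul_rpow (rpow_nonneg (hw z) _) (norm_nonneg _), ← rpow_mul (hw z), hqP, ← hK z hz]
  ring

theorem neg_setIntegral_fderiv_rpow_le (K : KnotheMap a R) (ha : 0 ≤ a) (hR : 0 ≤ R)
    (hpP : p.HolderConjugate P) (hq : 0 < q) (hqp : q⁻¹ = p⁻¹ - 2⁻¹) (hw : ContDiff ℝ 1 w)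
    (hwpos : ∀ z, 0 < w z) (hG : Continuous G)
    (hK : ∀ z ∈ centeredSquare a, G (K z) * K.jacobian z = w z ^ q) :
    -∫ z in centeredSquare a, fderiv ℝ (fun z => w z ^ (q / 2)) z (K z) ≤
      q / 2 * ((∫ z in centeredSquare a, ‖fderiv ℝ w z‖ ^ p) ^ (1 / p) *
        (∫ z in centeredSquare R, G z * ‖z‖ ^ P) ^ (1 / P)) := by
  have hP := hpP.symm.pos
  have hqP : (q / 2 - 1) * P = q := by
    have hqP : 2⁻¹ - q⁻¹ = P⁻¹ := by rw [← hpP.one_sub_inv, hqp]; ring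
    field_simp at hqP ⊢
    linarith
  have hKcont := K.continuous
  have hgrad : Continuous fun z => ‖fderiv ℝ w z‖ := (hw.continuous_fderiv one_ne_zero).norm
  have hv : Continuous fun z => w z ^ (q / 2 - 1) * ‖K z‖ :=
    (hw.continuous.rpow_const fun z => .inl (hwpos z).ne').mul hKcont.norm
  calc -∫ z in centeredSquare a, fderiv ℝ (fun z => w z ^ (q / 2)) z (K z)
      ≤ ∫ z in centeredSquare a, q / 2 * (‖fderiv ℝ w z‖ * (w z ^ (q / 2 - 1) * ‖K z‖)) := by
        rw [← integral_neg]
        refine integral_mono (integrableOn_centeredSquare ?_ a).neg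
          (integrableOn_centeredSquare ((hgrad.mul hv).const_mul _) a) fun z =>
            neg_fderiv_rpow_apply_le (hw.differentiable one_ne_zero z) (hwpos z) (by positivity) _
        exact ((hw.rpow_const_of_ne fun z => (hwpos z).ne').continuous_fderiv one_ne_zero).clm_apply
          hKcont
    _ ≤ _ := by
        rw [integral_const_mul,
          ← K.setIntegral_rpow_mul_norm ha hR hP hqP (fun z => (hwpos z).le) hG hK]
        refine mul_le_mul_of_nonneg_left (integral_mul_le_Lp_mul_Lq_of_nonneg hpP ?_ ?_
          (memLp_centeredSquare hgrad a _) (memLp_centeredSquare hv a _)) (by positivity)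
        · exact .of_forall fun z => norm_nonneg _
        · exact .of_forall fun z => mul_nonneg (rpow_nonneg (hwpos z).le _) (norm_nonneg _)

end KnotheMap

theorem setIntegral_sqrt_le_of_pos {p P q : ℝ} (hpP : p.HolderConjugate P) (hq : 0 < q)
    (hqp : q⁻¹ = p⁻¹ - 2⁻¹) {a R c : ℝ} (ha : 0 < a) (hR : 0 < R) {w G : ℂ → ℝ}
    (hw : ContDiff ℝ 1 w) (hwpos : ∀ z, 0 < w z) (hc : ∀ z ∉ Ioo (-a) a ×ℂ Ioo (-a) a, w z = c)
    (hG : Continuous G) (hGpos : ∀ z, 0 < G z)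
    (hmass : ∫ z in centeredSquare a, w z ^ q = ∫ z in centeredSquare R, G z) :
    ∫ z in centeredSquare R, √(G z) ≤ 4 * a * R * c ^ (q / 2) +
      q / 4 * ((∫ z in centeredSquare a, ‖fderiv ℝ w z‖ ^ p) ^ (1 / p) *
        (∫ z in centeredSquare R, G z * ‖z‖ ^ P) ^ (1 / P)) := by
  obtain ⟨K, hK⟩ := exists_knotheMap (hw.continuous.rpow_const fun z => .inl (hwpos z).ne')
    (fun z => rpow_pos_of_pos (hwpos z) q) hG hGpos ha hR hmass
  have htransport := K.setIntegral_sqrt_le ha.le hR.le (h := fun z => w z ^ (q / 2))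
    (c := c ^ (q / 2)) (hw.rpow_const_of_ne fun z => (hwpos z).ne')
    (fun z => rpow_nonneg (hwpos z).le _) (fun z hz => by rw [hc z hz]) hG fun z hz => by
      rw [hK z hz, ← rpow_mul_natCast (hwpos z).le, Nat.cast_ofNat, div_mul_cancel₀ q two_ne_zero]
  have hholder := K.neg_setIntegral_fderiv_rpow_le ha.le hR.le hpP hq hqp hw hwpos hG hK
  linarith

theorem norm_fderiv_sqrt_sq_add_sq_le {E : Type*} [NormedAddCommGroup E] [NormedSpace ℝ E]
    {u : E → ℝ} {z : E} (hu : DifferentiableAt ℝ u z) {ε : ℝ} (hε : ε ≠ 0) :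
    ‖fderiv ℝ (fun z => √(u z ^ 2 + ε ^ 2)) z‖ ≤ ‖fderiv ℝ u z‖ := by
  have hpos : 0 < u z ^ 2 + ε ^ 2 := by positivity
  have hsqrt := ((hu.hasFDerivAt.pow 2).add_const (ε ^ 2)).sqrt hpos.ne'
  rw [hsqrt.fderiv, smul_smul, norm_smul]
  refine mul_le_of_le_one_left (norm_nonneg _) ?_
  have hfactor : 1 / (2 * √(u z ^ 2 + ε ^ 2)) * (2 • u z ^ (2 - 1)) =
      u z / √(u z ^ 2 + ε ^ 2) := by
    rw [nsmul_eq_mul, Nat.cast_ofNat, pow_one]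
    field_simp
  rw [hfactor, norm_div, Real.norm_eq_abs, Real.norm_of_nonneg (Real.sqrt_nonneg _)]
  exact div_le_one_of_le₀ (Real.abs_le_sqrt (by linarith [sq_nonneg ε])) (Real.sqrt_nonneg _)

section

variable {p P q : ℝ} {u G : ℂ → ℝ}

theorem setIntegral_centeredSquare_pos (hG : Continuous G) (hGpos : ∀ z, 0 < G z) {a : ℝ}
    (ha : 0 < a) : 0 < ∫ z in centeredSquare a, G z := by
  rw [setIntegral_centeredSquare hG ha.le]
  exact intervalIntegral.intervalIntegral_pos_of_pos
    ((continuous_marginal hG a).intervalIntegrable _ _) (marginal_pos hG hGpos ha) (by linarith)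

theorem sqrt_mul_setIntegral_sqrt_le_of_pos (hpP : p.HolderConjugate P) (hq : 0 < q)
    (hqp : q⁻¹ = p⁻¹ - 2⁻¹) {a R c : ℝ} (ha : 0 < a) (hR : 0 < R) (hu : ContDiff ℝ 1 u)
    (hupos : ∀ z, 0 < u z) (hc : ∀ z ∉ Ioo (-a) a ×ℂ Ioo (-a) a, u z = c) (hG : Continuous G)
    (hGpos : ∀ z, 0 < G z) :
    √((∫ z in centeredSquare a, u z ^ q) / ∫ z in centeredSquare R, G z) *
        ∫ z in centeredSquare R, √(G z) ≤
      4 * a * R * c ^ (q / 2) + q / 4 * ((∫ z in centeredSquare a, ‖fderiv ℝ u z‖ ^ p) ^ (1 / p) *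
        ((∫ z in centeredSquare a, u z ^ q) / (∫ z in centeredSquare R, G z) *
          ∫ z in centeredSquare R, G z * ‖z‖ ^ P) ^ (1 / P)) := by
  have hm := setIntegral_centeredSquare_pos hG hGpos hR
  set ρ := (∫ z in centeredSquare a, u z ^ q) / ∫ z in centeredSquare R, G z
  have hρ : 0 < ρ := div_pos (setIntegral_centeredSquare_pos
    (hu.continuous.rpow_const fun z => .inl (hupos z).ne')
    (fun z => rpow_pos_of_pos (hupos z) q) ha) hm
  have hscaled := setIntegral_sqrt_le_of_pos (G := fun z => ρ * G z) hpP hq hqp ha hR hu hupos hc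
    (hG.const_mul ρ) (fun z => mul_pos hρ (hGpos z)) (by
      rw [integral_const_mul, div_mul_cancel₀ _ hm.ne'])
  simpa only [Real.sqrt_mul hρ.le, mul_assoc, integral_const_mul] using hscaled

theorem sqrt_mul_setIntegral_sqrt_le_add (hpP : p.HolderConjugate P) (hq : 0 < q)
    (hqp : q⁻¹ = p⁻¹ - 2⁻¹) {a R ε : ℝ} (ha : 0 < a) (hR : 0 < R) (hε : 0 < ε)
    (hu : ContDiff ℝ 1 u) (hsupp : ∀ z ∉ Ioo (-a) a ×ℂ Ioo (-a) a, u z = 0) (hG : Continuous G)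
    (hGpos : ∀ z, 0 < G z) :
    √((∫ z in centeredSquare a, √(u z ^ 2 + ε ^ 2) ^ q) / ∫ z in centeredSquare R, G z) *
        ∫ z in centeredSquare R, √(G z) ≤
      4 * a * R * ε ^ (q / 2) +
        q / 4 * ((∫ z in centeredSquare a, ‖fderiv ℝ u z‖ ^ p) ^ (1 / p) *
          ((∫ z in centeredSquare a, √(u z ^ 2 + ε ^ 2) ^ q) / (∫ z in centeredSquare R, G z) *
            ∫ z in centeredSquare R, G z * ‖z‖ ^ P) ^ (1 / P)) := by
  have hpos (z : ℂ) : 0 < u z ^ 2 + ε ^ 2 := by positivity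
  have hw : ContDiff ℝ 1 fun z => √(u z ^ 2 + ε ^ 2) :=
    ((hu.pow 2).add contDiff_const).sqrt fun z => (hpos z).ne'
  refine (sqrt_mul_setIntegral_sqrt_le_of_pos hpP hq hqp ha hR hw
    (fun z => Real.sqrt_pos.2 (hpos z)) (c := ε) (fun z hz => by
      rw [hsupp z hz, zero_pow two_ne_zero, zero_add, Real.sqrt_sq hε.le]) hG hGpos).trans ?_
  have hgrad : ∫ z in centeredSquare a, ‖fderiv ℝ (fun z => √(u z ^ 2 + ε ^ 2)) z‖ ^ p ≤
      ∫ z in centeredSquare a, ‖fderiv ℝ u z‖ ^ p := by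
    refine integral_mono (integrableOn_centeredSquare ?_ a) (integrableOn_centeredSquare ?_ a)
      fun z => rpow_le_rpow (norm_nonneg _) (norm_fderiv_sqrt_sq_add_sq_le
        (hu.differentiable one_ne_zero z) hε.ne') hpP.pos.le
    · exact (hw.continuous_fderiv one_ne_zero).norm.rpow_const fun _ => .inr hpP.pos.le
    · exact (hu.continuous_fderiv one_ne_zero).norm.rpow_const fun _ => .inr hpP.pos.le
  have hm := setIntegral_centeredSquare_pos hG hGpos hR
  have hmoment : 0 ≤ ∫ z in centeredSquare R, G z * ‖z‖ ^ P :=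
    integral_nonneg fun z => mul_nonneg (hGpos z).le (by positivity)
  have hp := hpP.pos
  gcongr

theorem sqrt_mul_setIntegral_sqrt_le (hpP : p.HolderConjugate P) (hq : 0 < q)
    (hqp : q⁻¹ = p⁻¹ - 2⁻¹) {a R : ℝ} (ha : 0 < a) (hR : 0 < R) (hu : ContDiff ℝ 1 u)
    (hsupp : ∀ z ∉ Ioo (-a) a ×ℂ Ioo (-a) a, u z = 0) (hG : Continuous G)
    (hGpos : ∀ z, 0 < G z) :
    √((∫ z in centeredSquare a, |u z| ^ q) / ∫ z in centeredSquare R, G z) *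
        ∫ z in centeredSquare R, √(G z) ≤
      q / 4 * ((∫ z in centeredSquare a, ‖fderiv ℝ u z‖ ^ p) ^ (1 / p) *
        ((∫ z in centeredSquare a, |u z| ^ q) / (∫ z in centeredSquare R, G z) *
          ∫ z in centeredSquare R, G z * ‖z‖ ^ P) ^ (1 / P)) := by
  have hP := hpP.symm.pos
  have hucont := hu.continuous
  set M : ℝ → ℝ := fun ε => ∫ z in centeredSquare a, √(u z ^ 2 + ε ^ 2) ^ q
  have hM : Continuous M := continuous_parametric_integral_of_continuous
    (f := fun ε z => √(u z ^ 2 + ε ^ 2) ^ q)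
    (Continuous.rpow_const (by fun_prop) fun _ => .inr hq.le) (isCompact_centeredSquare a)
  have hM₀ : M 0 = ∫ z in centeredSquare a, |u z| ^ q := by
    simp only [M, ne_eq, OfNat.ofNat_ne_zero, not_false_eq_true, zero_pow, add_zero,
      Real.sqrt_sq_eq_abs]
  have hlimit := le_on_closure (s := Ioi 0) (fun ε (hε : 0 < ε) =>
      sqrt_mul_setIntegral_sqrt_le_add hpP hq hqp ha hR hε hu hsupp hG hGpos)
    (((hM.div_const _).sqrt.mul_const _).continuousOn) (Continuous.continuousOn ?_) (x := 0)
    (by simp [closure_Ioi])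
  · change √(M 0 / _) * _ ≤ _ + _ * (_ * (M 0 / _ * _) ^ _) at hlimit
    simpa only [hM₀, zero_rpow (half_pos hq).ne', mul_zero, zero_add] using hlimit
  · exact ((continuous_id.rpow_const fun _ => .inr (half_pos hq).le).const_mul _).add
      ((((hM.div_const _).mul_const _).rpow_const fun _ => .inr (by positivity)).const_mul _
        |>.const_mul _)

theorem sqrt_mul_integral_sqrt_le (hpP : p.HolderConjugate P) (hq : 0 < q)
    (hqp : q⁻¹ = p⁻¹ - 2⁻¹) {a : ℝ} (ha : 0 < a) (hu : ContDiff ℝ 1 u)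
    (hsupp : ∀ z ∉ Ioo (-a) a ×ℂ Ioo (-a) a, u z = 0) (hG : Continuous G)
    (hGpos : ∀ z, 0 < G z) (hGint : Integrable G) (hGsqrt : Integrable fun z => √(G z))
    (hGmoment : Integrable fun z => G z * ‖z‖ ^ P) :
    √((∫ z in centeredSquare a, |u z| ^ q) / ∫ z, G z) * ∫ z, √(G z) ≤
      q / 4 * ((∫ z in centeredSquare a, ‖fderiv ℝ u z‖ ^ p) ^ (1 / p) *
        ((∫ z in centeredSquare a, |u z| ^ q) / (∫ z, G z) * ∫ z, G z * ‖z‖ ^ P) ^ (1 / P)) := by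
  have hP := hpP.symm.pos
  have hm : 0 < ∫ z, G z := integral_pos_of_integrable_nonneg_nonzero hG hGint
    (fun z => (hGpos z).le) (hGpos 0).ne'
  have hexhaust {k : ℂ → ℝ} (hk : Integrable k) :
      Tendsto (fun R => ∫ z in centeredSquare R, k z) atTop (𝓝 (∫ z, k z)) :=
    aecover_centeredSquare.integral_tendsto_of_countably_generated hk
  have hratio := (tendsto_const_nhds (x := ∫ z in centeredSquare a, |u z| ^ q)).div (hexhaust hGint)
    hm.ne'
  refine le_of_tendsto_of_tendsto (hratio.sqrt.mul (hexhaust hGsqrt))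
    (((hratio.mul (hexhaust hGmoment)).rpow_const (.inr (by positivity))).const_mul _
      |>.const_mul _) ?_
  filter_upwards [eventually_gt_atTop 0] with R hR
  exact sqrt_mul_setIntegral_sqrt_le hpP hq hqp ha hR hu hsupp hG hGpos

theorem rpow_mul_le_of_sqrt_mul_le (hpP : p.HolderConjugate P) (hq : 0 < q)
    (hqp : q⁻¹ = p⁻¹ - 2⁻¹) {M m I J A c : ℝ} (hM : 0 ≤ M) (hm : 0 < m) (hJ : 0 ≤ J) (hA : 0 ≤ A)
    (hc : 0 ≤ c) (h : √(M / m) * I ≤ c * (A * (M / m * J) ^ (1 / P))) :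
    M ^ (1 / q) * I ≤ c * m ^ (1 / q) * J ^ (1 / P) * A := by
  rcases hM.eq_or_lt with rfl | hM
  · rw [zero_rpow (one_div_pos.2 hq).ne', zero_mul]
    positivity
  set ρ := M / m
  have hρ : 0 < ρ := div_pos hM hm
  have hexp : (1 / 2 : ℝ) = 1 / P + 1 / q := by
    rw [one_div P, one_div q, hqp, ← hpP.one_sub_inv]
    ring
  rw [Real.sqrt_eq_rpow, hexp, rpow_add hρ, mul_rpow hρ.le hJ] at h
  have hcancel : ρ ^ (1 / q) * I ≤ c * (A * J ^ (1 / P)) := by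
    refine le_of_mul_le_mul_left ?_ (rpow_pos_of_pos hρ (1 / P))
    linarith
  calc M ^ (1 / q) * I = m ^ (1 / q) * (ρ ^ (1 / q) * I) := by
        rw [← div_mul_cancel₀ M hm.ne', mul_rpow hρ.le hm.le]
        ring
    _ ≤ m ^ (1 / q) * (c * (A * J ^ (1 / P))) := by gcongr
    _ = c * m ^ (1 / q) * J ^ (1 / P) * A := by ring

theorem setIntegral_norm_rpow_of_forall_notMem_eq_zero {α E : Type*} [MeasurableSpace α]
    {μ : Measure α} [NormedAddCommGroup E] {s : Set α} {g : α → E} (hgs : ∀ x ∉ s, g x = 0)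
    {q : ℝ} (hq : q ≠ 0) : ∫ x in s, ‖g x‖ ^ q ∂μ = ∫ x, ‖g x‖ ^ q ∂μ :=
  setIntegral_eq_integral_of_forall_compl_eq_zero fun x hx => by
    rw [hgs x hx, norm_zero, zero_rpow hq]

theorem rpow_integral_abs_rpow_mul_le (hpP : p.HolderConjugate P) (hq : 0 < q)
    (hqp : q⁻¹ = p⁻¹ - 2⁻¹) (hu : ContDiff ℝ 1 u) (hcompact : HasCompactSupport u)
    (hG : Continuous G) (hGpos : ∀ z, 0 < G z) (hGint : Integrable G)
    (hGsqrt : Integrable fun z => √(G z)) (hGmoment : Integrable fun z => G z * ‖z‖ ^ P) :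
    (∫ z, |u z| ^ q) ^ (1 / q) * ∫ z, √(G z) ≤
      q / 4 * (∫ z, G z) ^ (1 / q) * (∫ z, G z * ‖z‖ ^ P) ^ (1 / P) *
        (∫ z, ‖fderiv ℝ u z‖ ^ p) ^ (1 / p) := by
  obtain ⟨a, ha, hball⟩ := hcompact.isCompact.isBounded.subset_ball_lt 0 0
  have hopen : ∀ z ∉ Ioo (-a) a ×ℂ Ioo (-a) a, z ∉ tsupport u := fun z hz hzu => hz
    ⟨abs_lt.1 ((Complex.abs_re_le_norm z).trans_lt (mem_ball_zero_iff.1 (hball hzu))),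
      abs_lt.1 ((Complex.abs_im_le_norm z).trans_lt (mem_ball_zero_iff.1 (hball hzu)))⟩
  have hclosed : ∀ z ∉ centeredSquare a, z ∉ tsupport u := fun z hz => hopen z fun hz' =>
    hz ⟨Ioo_subset_Icc_self hz'.1, Ioo_subset_Icc_self hz'.2⟩
  have hu_eq : ∫ z in centeredSquare a, |u z| ^ q = ∫ z, |u z| ^ q :=
    setIntegral_norm_rpow_of_forall_notMem_eq_zero
      (fun z hz => image_eq_zero_of_notMem_tsupport (hclosed z hz)) hq.ne'
  have hgrad_eq : ∫ z in centeredSquare a, ‖fderiv ℝ u z‖ ^ p = ∫ z, ‖fderiv ℝ u z‖ ^ p :=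
    setIntegral_norm_rpow_of_forall_notMem_eq_zero
      (fun z hz => fderiv_of_notMem_tsupport ℝ (hclosed z hz)) hpP.pos.ne'
  have hbound := sqrt_mul_integral_sqrt_le hpP hq hqp ha hu
    (fun z hz => image_eq_zero_of_notMem_tsupport (hopen z hz)) hG hGpos hGint hGsqrt hGmoment
  rw [hu_eq, hgrad_eq] at hbound
  exact rpow_mul_le_of_sqrt_mul_le hpP hq hqp (by positivity)
    (integral_pos_of_integrable_nonneg_nonzero hG hGint (fun z => (hGpos z).le) (hGpos 0).ne')
    (integral_nonneg fun z => mul_nonneg (hGpos z).le (by positivity)) (by positivity)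
    (by positivity) hbound

end

/-! ### The extremal density and the sharp constant -/

theorem integral_one_add_norm_rpow_neg {P k : ℝ} (hP : 1 ≤ P) (hk : 2 / P < k) :
    ∫ z : ℂ, (1 + ‖z‖ ^ P) ^ (-k) = π * Gamma (2 / P + 1) * Gamma (k - 2 / P) / Gamma k := by
  have hk₀ : 0 < k := (by positivity : 0 < 2 / P).trans hk
  -- Expand the power as a Gamma integral in `t` and integrate over the plane first.
  set F : ℂ → ℝ → ℝ := fun z t => t ^ (k - 1) * exp (-((1 + ‖z‖ ^ P) * t))
  have hF (z : ℂ) (t : ℝ) : F z t = t ^ (k - 1) * exp (-t) * exp (-t * ‖z‖ ^ P) := by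
    simp only [F, mul_assoc, ← exp_add]
    ring_nf
  have hplane {t : ℝ} (ht : 0 < t) : ∫ z, F z t =
      π * Gamma (2 / P + 1) * (exp (-t) * t ^ (k - 2 / P - 1)) := by
    simp only [hF, integral_const_mul, Complex.integral_exp_neg_mul_rpow hP ht]
    rw [show k - 2 / P - 1 = k - 1 + -2 / P by ring, rpow_add ht]
    ring
  have hray (z : ℂ) : ∫ t in Ioi 0, F z t = (1 + ‖z‖ ^ P) ^ (-k) * Gamma k := by
    rw [Real.integral_rpow_mul_exp_neg_mul_Ioi hk₀ (by positivity), one_div,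
      inv_rpow (by positivity), ← rpow_neg (by positivity)]
  have hint : Integrable (Function.uncurry F) (volume.prod (volume.restrict (Ioi 0))) := by
    refine (integrable_prod_iff' ?_).2 ⟨ae_restrict_of_forall_mem measurableSet_Ioi fun t ht => ?_,
      ?_⟩
    · exact Measurable.aestronglyMeasurable (by unfold Function.uncurry; fun_prop)
    · refine .of_integral_ne_zero ?_
      rw [Function.uncurry_def, hplane ht]
      have := Gamma_pos_of_pos (by positivity : 0 < 2 / P + 1)
      have := rpow_pos_of_pos ht (k - 2 / P - 1)
      positivity
    · refine ((Real.GammaIntegral_convergent (sub_pos.2 hk)).const_mul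
        (π * Gamma (2 / P + 1))).congr ?_
      refine ae_restrict_of_forall_mem measurableSet_Ioi fun t (ht : 0 < t) => ?_
      dsimp only
      rw [← hplane ht]
      congr with z
      exact (Real.norm_of_nonneg (by positivity)).symm
  rw [eq_div_iff (Gamma_pos_of_pos hk₀).ne', ← integral_mul_const]
  simp only [← hray]
  rw [integral_integral_swap hint, setIntegral_congr_fun measurableSet_Ioi fun t ht => hplane ht,
    integral_const_mul, Real.Gamma_eq_integral (sub_pos.2 hk)]

theorem integrable_one_add_norm_rpow_neg {P k : ℝ} (hP : 1 ≤ P) (hk : 2 / P < k) :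
    Integrable fun z : ℂ => (1 + ‖z‖ ^ P) ^ (-k) := by
  refine .of_integral_ne_zero ?_
  rw [integral_one_add_norm_rpow_neg hP hk]
  have hk₀ : 0 < k := (by positivity : 0 < 2 / P).trans hk
  have := sub_pos.2 hk
  positivity

/-- The optimal constant of the planar Sobolev inequality
`‖u‖_{2p/(2-p)} ≤ C ‖∇u‖_p`, `1 < p < 2`. -/
noncomputable def aubinTalentiConst (p : ℝ) : ℝ :=
  ((p - 1) / (2 - p)) ^ ((p - 1) / p) * (√π * 2 ^ (1 / p))⁻¹ *
    (Gamma (2 / p) * Gamma (3 - 2 / p)) ^ (-(1 / 2 : ℝ))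

section AubinTalenti

variable {p P q : ℝ}

theorem two_div_eq_of_holderConjugate (hpP : p.HolderConjugate P) : 2 / P = 2 - 2 / p := by
  rw [div_eq_mul_inv, ← hpP.one_sub_inv]
  ring

theorem integral_one_add_norm_rpow_neg_two (hpP : p.HolderConjugate P) :
    ∫ z : ℂ, (1 + ‖z‖ ^ P) ^ (-2 : ℝ) = π * (Gamma (2 / p) * Gamma (3 - 2 / p)) := by
  have hP := two_div_eq_of_holderConjugate hpP
  have hlt : 2 / P < 2 := by linarith [div_pos two_pos hpP.pos]
  rw [integral_one_add_norm_rpow_neg hpP.symm.lt.le hlt, Gamma_two, hP]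
  ring_nf

theorem integral_one_add_norm_rpow_neg_one (hpP : p.HolderConjugate P) (hp : p < 2) :
    ∫ z : ℂ, (1 + ‖z‖ ^ P) ^ (-1 : ℝ) =
      p / (2 - p) * (π * (Gamma (2 / p) * Gamma (3 - 2 / p))) := by
  have hP := two_div_eq_of_holderConjugate hpP
  have hp₀ := hpP.pos
  have hlt : 1 < 2 / p := (one_lt_div hp₀).2 hp
  have hGamma : Gamma (2 / p) = (2 / p - 1) * Gamma (2 / p - 1) := by
    rw [← Gamma_add_one (sub_pos.2 hlt).ne', sub_add_cancel]
  have hp₂ : 2 - p ≠ 0 := by linarith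
  have hcoeff : p / (2 - p) * (2 / p - 1) = 1 := by field_simp
  rw [integral_one_add_norm_rpow_neg hpP.symm.lt.le (by linarith), Gamma_one, hP, hGamma,
    show 2 - 2 / p + 1 = 3 - 2 / p by ring, show 1 - (2 - 2 / p) = 2 / p - 1 by ring]
  linear_combination (-π * Gamma (2 / p - 1) * Gamma (3 - 2 / p)) * hcoeff

theorem one_add_norm_rpow_neg_two_mul (P : ℝ) (z : ℂ) :
    (1 + ‖z‖ ^ P) ^ (-2 : ℝ) * ‖z‖ ^ P = (1 + ‖z‖ ^ P) ^ (-1 : ℝ) - (1 + ‖z‖ ^ P) ^ (-2 : ℝ) := by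
  have hpos : 0 < 1 + ‖z‖ ^ P := by positivity
  rw [show (-1 : ℝ) = -2 + 1 by norm_num, rpow_add_one hpos.ne']
  ring

theorem integrable_one_add_norm_rpow_neg_two_mul (hP : 2 < P) :
    Integrable fun z : ℂ => (1 + ‖z‖ ^ P) ^ (-2 : ℝ) * ‖z‖ ^ P := by
  have hlt : 2 / P < 1 := (div_lt_one (by linarith)).2 hP
  simp only [one_add_norm_rpow_neg_two_mul]
  exact (integrable_one_add_norm_rpow_neg (by linarith) hlt).sub
    (integrable_one_add_norm_rpow_neg (by linarith) (by linarith))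

theorem integral_one_add_norm_rpow_neg_two_mul (hpP : p.HolderConjugate P) (hp : p < 2) :
    ∫ z : ℂ, (1 + ‖z‖ ^ P) ^ (-2 : ℝ) * ‖z‖ ^ P =
      2 * ((p - 1) / (2 - p)) * (π * (Gamma (2 / p) * Gamma (3 - 2 / p))) := by
  have hlt : 2 / P < 1 := by
    rw [two_div_eq_of_holderConjugate hpP]
    linarith [(one_lt_div hpP.pos).2 hp]
  have hp₂ : 2 - p ≠ 0 := by linarith
  simp only [one_add_norm_rpow_neg_two_mul]
  rw [integral_sub (integrable_one_add_norm_rpow_neg hpP.symm.lt.le hlt)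
    (integrable_one_add_norm_rpow_neg hpP.symm.lt.le (by linarith)),
    integral_one_add_norm_rpow_neg_one hpP hp, integral_one_add_norm_rpow_neg_two hpP]
  field_simp
  ring

theorem Gamma_two_div_mul_Gamma_pos (hp : 1 < p) :
    0 < Gamma (2 / p) * Gamma (3 - 2 / p) := by
  have : 0 < 3 - 2 / p := by linarith [(div_lt_iff₀ (by linarith)).2 (by linarith : 2 < 2 * p)]
  positivity

theorem aubinTalentiConst_mul (hpP : p.HolderConjugate P) (hp : p < 2)
    (hqp : q⁻¹ = p⁻¹ - 2⁻¹) :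
    let m := π * (Gamma (2 / p) * Gamma (3 - 2 / p))
    aubinTalentiConst p * (p / (2 - p) * m) =
      q / 4 * m ^ (1 / q) * (2 * ((p - 1) / (2 - p)) * m) ^ (1 / P) := by
  intro m
  have hp₀ := hpP.pos
  have hp₂ : 0 < 2 - p := by linarith
  have hx : 0 < (p - 1) / (2 - p) := div_pos hpP.sub_one_pos hp₂
  have hΓ := Gamma_two_div_mul_Gamma_pos hpP.lt
  have hm : 0 < m := mul_pos pi_pos hΓ
  have hq : p / (2 - p) = q / 2 := by
    rw [← inv_inv q, hqp]
    field_simp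
  have hP : 1 / P = 1 - 1 / p := by rw [one_div, one_div, hpP.one_sub_inv]
  have hexp : (p - 1) / p = 1 / P := by rw [hP, sub_div, div_self hp₀.ne']
  have htwo : (2 : ℝ) ^ (1 / P) = 2 / 2 ^ (1 / p) := by rw [hP, rpow_sub two_pos, rpow_one]
  have hconst : aubinTalentiConst p =
      2⁻¹ * (2 * ((p - 1) / (2 - p))) ^ (1 / P) * m ^ (-(1 / 2) : ℝ) := by
    rw [aubinTalentiConst, hexp, mul_rpow two_pos.le hx.le, htwo, mul_rpow pi_pos.le hΓ.le,
      rpow_neg pi_pos.le, ← Real.sqrt_eq_rpow]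
    field_simp
  rw [hconst, hq, mul_rpow (by positivity) hm.le]
  have hpow : m ^ (-(1 / 2) : ℝ) * m = m ^ (1 / q) * m ^ (1 / P) := by
    rw [← rpow_add_one hm.ne', ← rpow_add hm, hP, one_div q, hqp]
    ring_nf
  linear_combination (q / 4 * (2 * ((p - 1) / (2 - p))) ^ (1 / P)) * hpow

theorem rpow_integral_abs_rpow_le_aubinTalentiConst (hp1 : 1 < p) (hp2 : p < 2)
    (hqp : q⁻¹ = p⁻¹ - 2⁻¹) {u : ℂ → ℝ} (hu : ContDiff ℝ 1 u) (hcompact : HasCompactSupport u) :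
    (∫ z, |u z| ^ q) ^ (1 / q) ≤ aubinTalentiConst p * (∫ z, ‖fderiv ℝ u z‖ ^ p) ^ (1 / p) := by
  have hpP := HolderConjugate.conjExponent hp1
  set P := conjExponent p
  have hq : 0 < q := by
    rw [← inv_pos, hqp, sub_pos]
    exact inv_strictAnti₀ hpP.pos hp2
  have hP : 2 < P := by
    have := hpP.symm.pos
    rw [← div_lt_one this, two_div_eq_of_holderConjugate hpP]
    linarith [(one_lt_div hpP.pos).2 hp2]
  have hbase (z : ℂ) : 0 < 1 + ‖z‖ ^ P := by positivity
  have hsqrt (z : ℂ) : √((1 + ‖z‖ ^ P) ^ (-2 : ℝ)) = (1 + ‖z‖ ^ P) ^ (-1 : ℝ) := by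
    rw [Real.sqrt_eq_rpow, ← rpow_mul (hbase z).le]
    norm_num
  have hbase_cont : Continuous fun z : ℂ => 1 + ‖z‖ ^ P :=
    continuous_const.add (continuous_norm.rpow_const fun _ => .inr (by linarith))
  have hlt : 2 / P < 1 := (div_lt_one (by linarith)).2 hP
  have hbound := rpow_integral_abs_rpow_mul_le (G := fun z => (1 + ‖z‖ ^ P) ^ (-2 : ℝ)) hpP hq hqp
    hu hcompact (hbase_cont.rpow_const fun z => .inl (hbase z).ne')
    (fun z => rpow_pos_of_pos (hbase z) _)
    (integrable_one_add_norm_rpow_neg (by linarith) (by linarith))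
    (by simpa only [hsqrt] using integrable_one_add_norm_rpow_neg (by linarith) hlt)
    (integrable_one_add_norm_rpow_neg_two_mul hP)
  simp only [hsqrt] at hbound
  rw [integral_one_add_norm_rpow_neg_one hpP hp2, integral_one_add_norm_rpow_neg_two hpP,
    integral_one_add_norm_rpow_neg_two_mul hpP hp2, ← aubinTalentiConst_mul hpP hp2 hqp] at hbound
  refine le_of_mul_le_mul_right (hbound.trans_eq (by ring)) ?_
  have hΓ := Gamma_two_div_mul_Gamma_pos hp1
  have := sub_pos.2 hp2
  have := hpP.pos
  positivity

end AubinTalenti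

/-! ### Hölder's inequality on a set of finite measure -/

theorem gradNormSq_eq_norm_fderiv_sq (f : ℂ → ℝ) (z : ℂ) :
    gradNormSq f z = ‖fderiv ℝ f z‖ ^ 2 := by
  have h := Complex.orthonormalBasisOneI.sum_sq_norm_inner_left
    ((InnerProductSpace.toDual ℝ ℂ).symm (fderiv ℝ f z))
  rw [LinearIsometryEquiv.norm_map] at h
  simpa [gradNormSq, InnerProductSpace.toDual_symm_apply] using h

theorem rpow_integral_norm_rpow_le {α E : Type*} [MeasurableSpace α] {μ : Measure α}
    [IsFiniteMeasure μ] [NormedAddCommGroup E] {r q : ℝ} (hr : 0 < r) (hrq : r ≤ q) {g : α → E}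
    (hg : MemLp g (ENNReal.ofReal q) μ) :
    (∫ x, ‖g x‖ ^ r ∂μ) ^ (1 / r) ≤
      (∫ x, ‖g x‖ ^ q ∂μ) ^ (1 / q) * μ.real univ ^ (1 / r - 1 / q) := by
  have hq := hr.trans_le hrq
  have hrq' := ENNReal.ofReal_le_ofReal hrq
  have h := eLpNorm_le_eLpNorm_mul_rpow_measure_univ hrq' hg.aestronglyMeasurable
  have hr₀ : ENNReal.ofReal r ≠ 0 := by simpa using hr
  have hq₀ : ENNReal.ofReal q ≠ 0 := by simpa using hq
  rw [(hg.mono_exponent hrq').eLpNorm_eq_integral_rpow_norm hr₀ ENNReal.ofReal_ne_top,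
    hg.eLpNorm_eq_integral_rpow_norm hq₀ ENNReal.ofReal_ne_top, ENNReal.toReal_ofReal hr.le,
    ENNReal.toReal_ofReal hq.le, ← ofReal_measureReal, ENNReal.ofReal_rpow_of_nonneg
      measureReal_nonneg (sub_nonneg.2 (one_div_le_one_div_of_le hr hrq)),
    ← ENNReal.ofReal_mul (by positivity), ENNReal.ofReal_le_ofReal_iff (by positivity)] at h
  simpa only [one_div] using h

theorem rpow_setIntegral_norm_rpow_le {α E : Type*} [TopologicalSpace α] [MeasurableSpace α]
    [OpensMeasurableSpace α] {μ : Measure α} [IsFiniteMeasureOnCompacts μ] [NormedAddCommGroup E]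
    {s : Set α} (hs : μ s ≠ ⊤) {r q : ℝ} (hr : 0 < r) (hrq : r ≤ q) {g : α → E}
    (hg : Continuous g) (hcompact : HasCompactSupport g) :
    (∫ x in s, ‖g x‖ ^ r ∂μ) ^ (1 / r) ≤
      (∫ x in s, ‖g x‖ ^ q ∂μ) ^ (1 / q) * μ.real s ^ (1 / r - 1 / q) := by
  have := Fact.mk hs.lt_top
  simpa only [measureReal_restrict_apply_univ] using
    rpow_integral_norm_rpow_le hr hrq ((hg.memLp_of_hasCompactSupport hcompact).restrict s)

theorem aubinTalentiConst_nonneg {p : ℝ} (hp1 : 1 < p) (hp2 : p < 2) :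
    0 ≤ aubinTalentiConst p := by
  have := Gamma_two_div_mul_Gamma_pos hp1
  have := sub_pos.2 hp1
  have := sub_pos.2 hp2
  unfold aubinTalentiConst
  positivity

theorem rpow_setIntegral_abs_rpow_le_aubinTalentiConst {Ω : Set ℂ} (hΩ : volume Ω ≠ ⊤)
    {r q p : ℝ} (hr : 0 < r) (hrq : r ≤ q) (hp1 : 1 < p) (hp2 : p < 2) (hqp : q⁻¹ = p⁻¹ - 2⁻¹)
    {f : ℂ → ℝ} (hf : ContDiff ℝ 1 f) (hcompact : HasCompactSupport f) (hfΩ : tsupport f ⊆ Ω) :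
    (∫ z in Ω, |f z| ^ r) ^ (1 / r) ≤
      aubinTalentiConst p * volume.real Ω ^ (1 / r) *
        (∫ z in Ω, gradNormSq f z) ^ (1 / 2 : ℝ) := by
  have hp : 0 < p := by linarith
  have hq : 0 < q := hr.trans_le hrq
  have hC := aubinTalentiConst_nonneg hp1 hp2
  have hf_eq : ∫ z in Ω, ‖f z‖ ^ q = ∫ z, ‖f z‖ ^ q :=
    setIntegral_norm_rpow_of_forall_notMem_eq_zero
      (fun z hz => image_eq_zero_of_notMem_tsupport (mt (@hfΩ z) hz)) hq.ne'
  have hgrad_eq : ∫ z in Ω, ‖fderiv ℝ f z‖ ^ p = ∫ z, ‖fderiv ℝ f z‖ ^ p :=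
    setIntegral_norm_rpow_of_forall_notMem_eq_zero
      (fun z hz => fderiv_of_notMem_tsupport ℝ (mt (@hfΩ z) hz)) hp.ne'
  have hglobal : (∫ z in Ω, ‖f z‖ ^ q) ^ (1 / q) ≤
      aubinTalentiConst p * (∫ z in Ω, ‖fderiv ℝ f z‖ ^ p) ^ (1 / p) := by
    rw [hf_eq, hgrad_eq]
    exact rpow_integral_abs_rpow_le_aubinTalentiConst hp1 hp2 hqp hf hcompact
  have hf_holder := rpow_setIntegral_norm_rpow_le hΩ hr hrq hf.continuous hcompact
  have hgrad_holder := rpow_setIntegral_norm_rpow_le hΩ hp hp2.le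
    (hf.continuous_fderiv one_ne_zero) (hcompact.fderiv ℝ)
  have hvolume : volume.real Ω ^ (1 / p - 1 / 2) * volume.real Ω ^ (1 / r - 1 / q) =
      volume.real Ω ^ (1 / r) := by
    have hexp : 1 / p - 1 / 2 = 1 / q := by simp only [one_div, hqp]
    rw [hexp, ← rpow_add_of_nonneg measureReal_nonneg (by positivity)
      (sub_nonneg.2 (one_div_le_one_div_of_le hr hrq)), add_sub_cancel]
  simp only [gradNormSq_eq_norm_fderiv_sq, ← rpow_two, ← Real.norm_eq_abs]
  calc (∫ z in Ω, ‖f z‖ ^ r) ^ (1 / r)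
    _ ≤ (∫ z in Ω, ‖f z‖ ^ q) ^ (1 / q) * volume.real Ω ^ (1 / r - 1 / q) := hf_holder
    _ ≤ aubinTalentiConst p * ((∫ z in Ω, ‖fderiv ℝ f z‖ ^ (2 : ℝ)) ^ (1 / 2 : ℝ) *
        volume.real Ω ^ (1 / p - 1 / 2)) * volume.real Ω ^ (1 / r - 1 / q) := by
      gcongr
      exact hglobal.trans (by gcongr)
    _ = aubinTalentiConst p * volume.real Ω ^ (1 / r) *
        (∫ z in Ω, ‖fderiv ℝ f z‖ ^ (2 : ℝ)) ^ (1 / 2 : ℝ) := by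
      rw [← hvolume]
      ring

end

theorem sobolev_poincare_const_general {Ω : Set ℂ} (hΩ : volume Ω ≠ ⊤) {r p : ℝ} (hr : 0 < r)
    (hp : 1 < p) (hp1 : 2 * r / (r + 2) ≤ p) (hp2 : p < 2) {f : ℂ → ℝ} (hf : ContDiff ℝ 1 f)
    (hfc : HasCompactSupport f) (hfs : tsupport f ⊆ Ω) :
    (∫ z in Ω, |f z| ^ r) ^ (1 / r) ≤
      ((p - 1) / (2 - p)) ^ ((p - 1) / p) * (Real.sqrt π * (2 : ℝ) ^ (1 / p))⁻¹ *
        (volume Ω).toReal ^ (1 / r) *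
        (Real.Gamma (2 / p) * Real.Gamma (3 - 2 / p)) ^ (-(1 / 2 : ℝ)) *
        (∫ z in Ω, gradNormSq f z) ^ (1 / 2 : ℝ) := by
  have hinv : 0 < p⁻¹ - 2⁻¹ := sub_pos.2 (inv_strictAnti₀ (by linarith) hp2)
  have hrq : r ≤ (p⁻¹ - 2⁻¹)⁻¹ := by
    rw [le_inv_comm₀ hr hinv]
    calc p⁻¹ - 2⁻¹ ≤ (2 * r / (r + 2))⁻¹ - 2⁻¹ := by gcongr
      _ = r⁻¹ := by field_simp; ring
  refine (rpow_setIntegral_abs_rpow_le_aubinTalentiConst hΩ hr hrq hp hp2 (inv_inv _) hf hfc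
    hfs).trans_eq ?_
  rw [aubinTalentiConst, measureReal_def]
  ring

/-- The Sobolev–Poincaré inequality with the explicit constant
`((p−1)/(2−p))^((p−1)/p) · (√π · 2^(1/p))⁻¹ · |Ω|^(1/r) · (Γ(2/p)Γ(3−2/p))^(−1/2)`
for smooth compactly supported functions on a bounded open set `Ω ⊂ ℂ`. -/
theorem sobolev_poincare_const (Ω : Set ℂ) (hΩo : IsOpen Ω) (hΩb : Bornology.IsBounded Ω)
    (r p : ℝ) (hr : 2 ≤ r) (hp1 : 2 * r / (r + 2) < p) (hp2 : p < 2)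
    (f : ℂ → ℝ) (hf : ContDiff ℝ (⊤ : ℕ∞) f) (hfc : HasCompactSupport f)
    (hfs : tsupport f ⊆ Ω) :
    (∫ z in Ω, |f z| ^ r) ^ (1 / r) ≤
      ((p - 1) / (2 - p)) ^ ((p - 1) / p) * (Real.sqrt π * (2 : ℝ) ^ (1 / p))⁻¹ *
        (volume Ω).toReal ^ (1 / r) *
        (Real.Gamma (2 / p) * Real.Gamma (3 - 2 / p)) ^ (-(1 / 2 : ℝ)) *
        (∫ z in Ω, gradNormSq f z) ^ (1 / 2 : ℝ) := by
  have hp : 1 < p := hp1.trans_le' ((one_le_div (by linarith)).2 (by linarith))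
  exact sobolev_poincare_const_general hΩb.measure_lt_top.ne (by linarith) hp hp1.le hp2
    (hf.of_le (by exact_mod_cast le_top)) hfc hfs
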